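/- arXiv:1304.5061 — 4 statements merged into one kernel-verified Lean document; each statement's English description precedes it below -/
import Mathlib

section
/- Let G be a finitely presented group and H a finite index subgroup of G (so H is also finitely presented). Then def(G) − 1 ≤ (def(H) − 1)/|G:H|; that is, deficiency minus one is supermultiplicative with respect to finite index subgroups. -/
/-!
A presentation `F/⟪R⟫` of `G` of deficiency `n - |R|` lifts to a presentation of `H`: the preimage
`K` of `H` in the free group `F` has index `d = |G : H|`, is free by the Nielsen–Schreier theorem,
and surjects onto `H` with kernel `⟪R⟫`, which is the normal closure in `K` of the `d * |R|`
conjugates of relators by a transversal of `K` (`exists_relators`). Since `K` has rank at least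
`d * (n - 1) + 1`, the deficiency of `H` minus one is at least `d * (n - 1 - |R|)`.

Mathlib's Nielsen–Schreier theorem does not give the rank, so it is bounded through rational
characters, the dimension of `Hom(K, ℚ)` being the rank of `K`. A `ℚ`-valued function on the edges
of the Schreier graph of `F/K` (a space of dimension `d * n`) integrates along loops to a character
of `K`; if this character is zero, the function is the coboundary of a vertex function. Coboundaries
have dimension at most `d - 1`, constants having zero coboundary (`index_mul_le_finrank`).

Rational characters also show that the supremum defining `deficiency H` is over a bounded set:
`n - |R| ≤ dim Hom(H, ℚ)` for every finite presentation of `H` (`presentation_le_finrank`). Without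
this the real-valued `sSup` would be the junk value `0`.
-/

open scoped Classical ENNReal

namespace ResDef

variable {G : Type*} [Group G]

/-- The order of the image of `x` in `G ⧸ H`: the least positive `j` with `x ^ j ∈ H`,
or `0` if there is no such `j`. -/
noncomputable def orderIn (H : Subgroup G) (x : G) : ℕ :=
  sInf {j : ℕ | 0 < j ∧ x ^ j ∈ H}

/-- The finite residual: the intersection of all finite index subgroups. -/
def finiteResidual (G : Type*) [Group G] : Subgroup G :=
  ⨅ (H : Subgroup G) (_ : H.index ≠ 0), H

/-- An element of a free group is not a proper power. -/
def NotProperPower {α : Type*} (u : FreeGroup α) : Prop :=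
  ∀ (v : FreeGroup α) (k : ℕ), u = v ^ k → k = 1

/-- `G` admits a finite presentation. -/
def FinitelyPresentedGroup (G : Type*) [Group G] : Prop :=
  ∃ (n : ℕ) (R : Finset (FreeGroup (Fin n))) (φ : FreeGroup (Fin n) →* G),
    Function.Surjective φ ∧ φ.ker = Subgroup.normalClosure (R : Set (FreeGroup (Fin n)))

/-- The deficiency of a finitely presented group. -/
noncomputable def deficiency (G : Type*) [Group G] : ℝ :=
  sSup {x : ℝ | ∃ (n : ℕ) (R : Finset (FreeGroup (Fin n))) (φ : FreeGroup (Fin n) →* G),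
    Function.Surjective φ ∧ φ.ker = Subgroup.normalClosure (R : Set (FreeGroup (Fin n))) ∧
    x = (n : ℝ) - (R.card : ℝ)}

/-- The residual deficiency of a finitely presented group. -/
noncomputable def rdef (G : Type*) [Group G] : ℝ :=
  sSup {x : ℝ | ∃ (n s : ℕ) (u : Fin s → FreeGroup (Fin n)) (m : Fin s → ℕ)
    (φ : FreeGroup (Fin n) →* G),
    (∀ i, 1 ≤ m i) ∧ (∀ i, NotProperPower (u i)) ∧ Function.Surjective φ ∧
    φ.ker = Subgroup.normalClosure (Set.range fun i => u i ^ m i) ∧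
    x = (n : ℝ) - ∑ i, ((orderIn (finiteResidual G) (φ (u i)) : ℝ))⁻¹}

/-- The deficiency gradient. -/
noncomputable def DG (G : Type*) [Group G] : ℝ :=
  sSup {x : ℝ | ∃ H : Subgroup G, H.index ≠ 0 ∧
    x = (deficiency H - 1) / (H.index : ℝ)}

/-- `ν_p(r)`: the largest `k` such that `r = s ^ (p ^ k)` for some `s`. -/
noncomputable def nuP (p : ℕ) {α : Type*} (r : FreeGroup α) : ℕ :=
  sSup {k : ℕ | ∃ s : FreeGroup α, r = s ^ (p ^ k)}

/-- The `p`-deficiency of a group. -/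
noncomputable def defP (p : ℕ) (G : Type*) [Group G] : ℝ :=
  sSup {x : ℝ | ∃ (n : ℕ) (R : Set (FreeGroup (Fin n))) (φ : FreeGroup (Fin n) →* G),
    Function.Surjective φ ∧ φ.ker = Subgroup.normalClosure R ∧
    Summable (fun r : R => ((p : ℝ) ^ (nuP p r.1))⁻¹) ∧
    x = (n : ℝ) - ∑' r : R, ((p : ℝ) ^ (nuP p r.1))⁻¹}

/-- The `p`-deficiency gradient. -/
noncomputable def DGp (p : ℕ) (G : Type*) [Group G] : ℝ :=
  sSup {x : ℝ | ∃ H : Subgroup G, H.Normal ∧ H.index ≠ 0 ∧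
    x = (defP p H - 1) / (H.index : ℝ)}

/-- The rank (minimal number of generators) of a group. -/
noncomputable def grpRank (G : Type*) [Group G] : ℕ :=
  sInf {n : ℕ | ∃ S : Finset G, S.card = n ∧ Subgroup.closure (S : Set G) = ⊤}

/-- The rank gradient. -/
noncomputable def RG (G : Type*) [Group G] : ℝ :=
  sInf {x : ℝ | ∃ H : Subgroup G, H.index ≠ 0 ∧
    x = ((grpRank H : ℝ) - 1) / (H.index : ℝ)}

/-- The `p`-rank: the largest `n` such that `G` surjects onto `(C_p)^n`. -/
noncomputable def pRank (p : ℕ) (G : Type*) [Group G] : ℕ :=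
  sSup {n : ℕ | ∃ f : G →* (Fin n → Multiplicative (ZMod p)), Function.Surjective f}

/-- The `p`-rank gradient. -/
noncomputable def RGp (p : ℕ) (G : Type*) [Group G] : ℝ :=
  sInf {x : ℝ | ∃ H : Subgroup G, H.Normal ∧ H.index ≠ 0 ∧
    x = ((pRank p H : ℝ) - 1) / (H.index : ℝ)}

/-- `G` is large: some finite index subgroup surjects onto a free group of rank 2. -/
def Large (G : Type*) [Group G] : Prop :=
  ∃ H : Subgroup G, H.index ≠ 0 ∧ ∃ f : H →* FreeGroup (Fin 2), Function.Surjective f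

/-- The first Betti number: the largest `n` such that `G` surjects onto `ℤ^n`. -/
noncomputable def firstBetti (G : Type*) [Group G] : ℕ :=
  sSup {n : ℕ | ∃ f : G →* Multiplicative (Fin n → ℤ), Function.Surjective f}

/-- The order of the image of `x` in `G ⧸ H`, as an extended natural number. -/
noncomputable def orderInE (H : Subgroup G) (x : G) : ℕ∞ :=
  if orderIn H x = 0 then ⊤ else (orderIn H x : ℕ∞)

/-- `ν(g; G, K)` from the paper, valued in `ℕ∞`. -/
noncomputable def nu (K : Subgroup G) (g : G) : ℕ∞ :=
  if g ∈ K then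
    sSup ((fun a : G => orderInE K a) '' {a : G | ∃ n : ℤ, a ^ n = g})
  else
    sSup ((fun q : G × ℤ => (q.2.natAbs : ℕ∞)) '' {q : G × ℤ | q.2 ≠ 0 ∧ q.1 ^ q.2 = g})

/-- The relative size `ν(g;G,K)⁻¹` of an element (`0` if `ν` is infinite). -/
noncomputable def relsizeElem (K : Subgroup G) (g : G) : ℝ :=
  (((nu K g).toNat : ℝ))⁻¹

/-- The relative size of a finite set. -/
noncomputable def relsizeFinset (K : Subgroup G) (S : Finset G) : ℝ :=
  ∑ g ∈ S, relsizeElem K g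

/-- The relative size of a normal subgroup `M`, finitely generated as a normal subgroup. -/
noncomputable def relsizeSubgroup (K M : Subgroup G) : ℝ :=
  sInf {x : ℝ | ∃ S : Finset G, Subgroup.normalClosure (S : Set G) = M ∧
    x = relsizeFinset K S}

/-- `a` is a minimal root of `g` in `G` with respect to `K`. -/
def IsMinimalRoot (K : Subgroup G) (g a : G) : Prop :=
  (g ∈ K ∧ (∃ n : ℤ, a ^ n = g) ∧ ((orderIn K a : ℕ∞) = nu K g)) ∨
  (g ∉ K ∧ ∃ m : ℕ, (m : ℕ∞) = nu K g ∧ a ^ m = g)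

/-! ### Rational characters -/

/-- The rational characters of a group, i.e. `H¹(A; ℚ)`, written as additive homomorphisms out of
`Additive A` so that the `ℚ`-vector space structure is the one Mathlib provides. -/
abbrev RatChar (A : Type*) [Group A] : Type _ := Additive A →+ ℚ

/-- Evaluation of rational characters at a family of group elements. -/
def RatChar.evalAt {A ι : Type*} [Group A] (g : ι → A) : RatChar A →ₗ[ℚ] (ι → ℚ) where
  toFun f i := f (Additive.ofMul (g i))
  map_add' _ _ := rfl
  map_smul' _ _ := rfl

/-- Pullback of rational characters along a group homomorphism. -/
def RatChar.pullback {A B : Type*} [Group A] [Group B] (φ : A →* B) :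
    RatChar B →ₗ[ℚ] RatChar A where
  toFun f := f.comp (MonoidHom.toAdditive φ)
  map_add' _ _ := rfl
  map_smul' _ _ := rfl

lemma RatChar.evalAt_injective {A ι : Type*} [Group A] (g : ι → A)
    (hg : Subgroup.closure (Set.range g) = ⊤) : Function.Injective (evalAt g) := by
  intro f₁ f₂ h
  ext x
  have hx : Additive.toMul x ∈ Subgroup.closure (Set.range g) := hg ▸ Subgroup.mem_top _
  have key : ∀ y ∈ Subgroup.closure (Set.range g),
      f₁ (Additive.ofMul y) = f₂ (Additive.ofMul y) := by
    intro y hy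
    induction hy using Subgroup.closure_induction with
    | mem y hy => obtain ⟨i, rfl⟩ := hy; exact congrFun h i
    | one => simp
    | mul a b _ _ ha hb => simp [ha, hb]
    | inv a _ ha => simp [ha]
  exact key _ hx

lemma RatChar.pullback_injective {A B : Type*} [Group A] [Group B] (φ : A →* B)
    (hφ : Function.Surjective φ) : Function.Injective (pullback φ) := by
  intro f₁ f₂ h
  ext x
  obtain ⟨a, ha⟩ := hφ (Additive.toMul x)
  have h1 := DFunLike.congr_fun h (Additive.ofMul a)
  change f₁ (Additive.ofMul (φ a)) = f₂ (Additive.ofMul (φ a)) at h1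
  rw [ha] at h1
  exact h1

lemma RatChar.finite_of_fg {A : Type*} [Group A] [hA : Group.FG A] :
    Module.Finite ℚ (RatChar A) := by
  obtain ⟨S, hS⟩ := Group.fg_def.1 hA
  exact Module.Finite.of_injective (evalAt (fun s : S => (s : A)))
    (evalAt_injective _ (by simpa using hS))

/-- A rational character of a free group is the same as a function on a free basis. -/
noncomputable def RatChar.freeEquiv (ι : Type*) :
    RatChar (FreeGroup ι) ≃ₗ[ℚ] (ι → ℚ) :=
  LinearEquiv.ofBijective (evalAt FreeGroup.of)
    ⟨evalAt_injective _ (FreeGroup.closure_range_of ι), fun f =>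
      ⟨MonoidHom.toAdditiveLeft (FreeGroup.lift fun i => Multiplicative.ofAdd (f i)), by
        ext i; simp [evalAt]⟩⟩

/-- The deficiency of any finite presentation of `A` is at most the first Betti number of `A`:
the characters of the free group killing the `R.card` relators have dimension at least
`n - R.card`, and each of them factors through `A`. -/
lemma presentation_le_finrank {A : Type*} [Group A] {n : ℕ} {R : Finset (FreeGroup (Fin n))}
    {φ : FreeGroup (Fin n) →* A} (hφ : Function.Surjective φ)
    (hker : φ.ker = Subgroup.normalClosure (R : Set (FreeGroup (Fin n)))) :
    n ≤ Module.finrank ℚ (RatChar A) + R.card := by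
  have hfin : Module.Finite ℚ (RatChar (FreeGroup (Fin n))) :=
    Module.Finite.equiv (RatChar.freeEquiv (Fin n)).symm
  have hn : Module.finrank ℚ (RatChar (FreeGroup (Fin n))) = n := by
    rw [(RatChar.freeEquiv (Fin n)).finrank_eq]; simp
  let E : RatChar (FreeGroup (Fin n)) →ₗ[ℚ] (R → ℚ) :=
    RatChar.evalAt fun r => (r : FreeGroup (Fin n))
  have h1 := LinearMap.finrank_range_add_finrank_ker E
  have h2 : Module.finrank ℚ (LinearMap.range E) ≤ R.card := by
    simpa using Submodule.finrank_le (LinearMap.range E)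
  have h3 : LinearMap.ker E ≤ LinearMap.range (RatChar.pullback φ) := by
    intro f hf
    let f' : FreeGroup (Fin n) →* Multiplicative ℚ := AddMonoidHom.toMultiplicativeRight f
    have hle : φ.ker ≤ f'.ker := by
      rw [hker]
      refine Subgroup.normalClosure_le_normal fun r hr => ?_
      exact congrFun hf ⟨r, hr⟩
    refine ⟨MonoidHom.toAdditiveLeft (φ.liftOfSurjective hφ ⟨f', hle⟩), ?_⟩
    refine AddMonoidHom.ext fun x => ?_
    exact congrArg Multiplicative.toAdd
      (φ.liftOfRightInverse_comp_apply _ (Function.rightInverse_surjInv hφ) ⟨f', hle⟩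
        (Additive.toMul x))
  have h4 := (Submodule.finrank_mono h3).trans
    (LinearMap.finrank_range_of_inj (RatChar.pullback_injective φ hφ)).le
  omega

/-! ### The rank of a finite index subgroup of a free group -/

section Cocycle

variable {n : ℕ} (K : Subgroup (FreeGroup (Fin n)))

/-- The edge space of the Schreier graph: rational functions on (coset, generator) pairs. -/
abbrev EdgeFun : Type := (FreeGroup (Fin n) ⧸ K) × Fin n → ℚ

/-- The homomorphism from the free group to the wreath product encoding the universal
cocycle on the Schreier graph. The generator `i` is sent to the function whose value at a
coset `x` is evaluation of an edge function on the edge `(x, i)`. -/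
noncomputable def wreathHom : FreeGroup (Fin n) →*
    ((FreeGroup (Fin n) ⧸ K) → Multiplicative (EdgeFun K →ₗ[ℚ] ℚ)) ⋊[mulAutArrow]
      FreeGroup (Fin n) :=
  FreeGroup.lift fun i =>
    ⟨fun x => Multiplicative.ofAdd (LinearMap.proj (x, i)), FreeGroup.of i⟩

lemma wreathHom_right (w : FreeGroup (Fin n)) : (wreathHom K w).right = w := by
  have : SemidirectProduct.rightHom.comp (wreathHom K) = MonoidHom.id _ := by
    ext i
    simp [wreathHom]
  exact DFunLike.congr_fun this w

/-- The universal cocycle: `cocycle K w x` integrates an edge function along the path from `x`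
to `w⁻¹ • x` in the Schreier graph labelled by `w`, where the edge `(x, i)` runs from `x` to the
translate of `x` by the inverse of the generator `i`. -/
noncomputable def cocycle (w : FreeGroup (Fin n)) (x : FreeGroup (Fin n) ⧸ K) :
    EdgeFun K →ₗ[ℚ] ℚ :=
  Multiplicative.toAdd ((wreathHom K w).left x)

lemma cocycle_mul (a b : FreeGroup (Fin n)) (x : FreeGroup (Fin n) ⧸ K) :
    cocycle K (a * b) x = cocycle K a x + cocycle K b (a⁻¹ • x) := by
  have h : (wreathHom K (a * b)).left x
      = (wreathHom K a).left x * (wreathHom K b).left (a⁻¹ • x) := by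
    rw [map_mul, SemidirectProduct.mul_left, wreathHom_right]
    rfl
  exact congrArg Multiplicative.toAdd h

lemma cocycle_of (i : Fin n) (x : FreeGroup (Fin n) ⧸ K) :
    cocycle K (FreeGroup.of i) x = LinearMap.proj (x, i) := by
  simp [cocycle, wreathHom]

/-- Integrating edge functions along loops at the base coset gives characters of `K`. -/
noncomputable def loopChar : EdgeFun K →ₗ[ℚ] RatChar K where
  toFun u := AddMonoidHom.mk' (fun k => cocycle K (Additive.toMul k : K) (1 : FreeGroup (Fin n)) u)
    fun a b => by
      have hfix : ((Additive.toMul a : K) : FreeGroup (Fin n))⁻¹ •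
          ((1 : FreeGroup (Fin n)) : FreeGroup (Fin n) ⧸ K) = (1 : FreeGroup (Fin n)) := by
        rw [MulAction.Quotient.smul_coe, QuotientGroup.eq]
        simp
      simp only [toMul_add, Subgroup.coe_mul, cocycle_mul, hfix, LinearMap.add_apply]
  map_add' u v := by ext k; simp
  map_smul' c u := by ext k; simp

/-- The coboundary of a vertex function on the Schreier graph. -/
noncomputable def coboundary : ((FreeGroup (Fin n) ⧸ K) → ℚ) →ₗ[ℚ] EdgeFun K where
  toFun g e := g ((FreeGroup.of e.2)⁻¹ • e.1) - g e.1
  map_add' g h := by ext e; simp; ring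
  map_smul' c g := by ext e; simp; ring

/-- An edge function with zero integral along every loop has a potential, namely its integral
along any path from the base coset. -/
lemma ker_loopChar_le : LinearMap.ker (loopChar K) ≤ LinearMap.range (coboundary K) := by
  intro u hu
  let h : FreeGroup (Fin n) → ℚ := fun w => cocycle K w (1 : FreeGroup (Fin n)) u
  have hK : ∀ k ∈ K, ∀ w, h (k * w) = h w := by
    intro k hk w
    have h0 : h k = 0 := DFunLike.congr_fun hu (Additive.ofMul (⟨k, hk⟩ : K))
    have hfix : k⁻¹ • ((1 : FreeGroup (Fin n)) : FreeGroup (Fin n) ⧸ K)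
        = (1 : FreeGroup (Fin n)) := by
      rw [MulAction.Quotient.smul_coe, QuotientGroup.eq]
      simpa using hk
    have h1 : h (k * w) = h k + h w := by
      simp only [h, cocycle_mul, hfix, LinearMap.add_apply]
    rw [h1, h0, zero_add]
  have hstep : ∀ w i, h (w * FreeGroup.of i) = h w + u ((w⁻¹ : FreeGroup (Fin n)), i) := by
    intro w i
    simp only [h, cocycle_mul, cocycle_of, LinearMap.add_apply, LinearMap.proj_apply,
      MulAction.Quotient.smul_coe, smul_eq_mul, mul_one]
  -- `h` only depends on the coset of `w⁻¹`, which makes the potential well defined.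
  have hwd : ∀ w : FreeGroup (Fin n),
      h (Quotient.out ((w⁻¹ : FreeGroup (Fin n)) : FreeGroup (Fin n) ⧸ K))⁻¹ = h w := by
    intro w
    obtain ⟨k, hk⟩ := QuotientGroup.mk_out_eq_mul K w⁻¹
    rw [hk, mul_inv_rev, inv_inv]
    exact hK _ (K.inv_mem k.2) w
  refine ⟨fun x => h (Quotient.out x)⁻¹, ?_⟩
  ext ⟨x, i⟩
  obtain ⟨v, rfl⟩ := QuotientGroup.mk_surjective x
  have e1 := hwd v⁻¹
  have e2 := hwd (v⁻¹ * FreeGroup.of i)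
  have e3 := hstep v⁻¹ i
  rw [inv_inv] at e1 e3
  rw [mul_inv_rev, inv_inv] at e2
  simp only [coboundary, LinearMap.coe_mk, AddHom.coe_mk, MulAction.Quotient.smul_coe, smul_eq_mul]
  change h (Quotient.out (((FreeGroup.of i)⁻¹ * v : FreeGroup (Fin n)) : FreeGroup (Fin n) ⧸ K))⁻¹
    - h (Quotient.out (v : FreeGroup (Fin n) ⧸ K))⁻¹ = u (v, i)
  linarith

/-- The inequality `d (n - 1) + 1 ≤ rank K` of the Schreier index formula, where `d` is the index. -/
lemma index_mul_le_finrank (hK : K.index ≠ 0) :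
    K.index * n + 1 ≤ Module.finrank ℚ (RatChar K) + K.index := by
  have : K.FiniteIndex := ⟨hK⟩
  have : Fintype (FreeGroup (Fin n) ⧸ K) := Fintype.ofFinite _
  have hd : Fintype.card (FreeGroup (Fin n) ⧸ K) = K.index := by
    rw [Subgroup.index, Nat.card_eq_fintype_card]
  have : Module.Finite ℚ (RatChar K) := RatChar.finite_of_fg
  have h1 := LinearMap.finrank_range_add_finrank_ker (loopChar K)
  have h2 := LinearMap.finrank_range_add_finrank_ker (coboundary K)
  have h3 := Submodule.finrank_mono (ker_loopChar_le K)
  have h4 := Submodule.finrank_le (LinearMap.range (loopChar K))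
  -- Constant functions lie in the kernel of the coboundary map.
  have h5 : 1 ≤ Module.finrank ℚ (LinearMap.ker (coboundary K)) := by
    rw [Nat.one_le_iff_ne_zero, Ne, Submodule.finrank_eq_zero]
    intro hbot
    have hc : (fun _ => 1 : (FreeGroup (Fin n) ⧸ K) → ℚ) ∈ LinearMap.ker (coboundary K) := by
      ext e; simp [coboundary]
    rw [hbot, Submodule.mem_bot] at hc
    exact one_ne_zero (congrFun hc (1 : FreeGroup (Fin n)))
  rw [Module.finrank_fintype_fun_eq_card, Fintype.card_prod, Fintype.card_fin, hd] at h1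
  rw [Module.finrank_fintype_fun_eq_card, hd] at h2
  omega

end Cocycle

/-- By the Nielsen–Schreier theorem a finite index subgroup of a free group of finite rank is free;
its rank is the dimension of its space of rational characters. -/
lemma nonempty_mulEquiv_free {n : ℕ} (K : Subgroup (FreeGroup (Fin n))) (hK : K.index ≠ 0) :
    Nonempty (FreeGroup (Fin (Module.finrank ℚ (RatChar K))) ≃* K) := by
  have : K.FiniteIndex := ⟨hK⟩
  have hfin : Module.Finite ℚ (RatChar K) := RatChar.finite_of_fg
  obtain ⟨ι, ⟨b⟩⟩ := IsFreeGroup.nonempty_basis (G := K)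
  let e := b.repr
  let E : (ι → ℚ) →ₗ[ℚ] RatChar K :=
    (RatChar.pullback e.toMonoidHom) ∘ₗ (RatChar.freeEquiv ι).symm.toLinearMap
  have hE : Function.Injective E :=
    (RatChar.pullback_injective e.toMonoidHom e.surjective).comp
      (RatChar.freeEquiv ι).symm.injective
  have hE' : Function.Injective (RatChar.freeEquiv ι ∘ RatChar.pullback e.symm.toMonoidHom) :=
    (RatChar.freeEquiv ι).injective.comp
      (RatChar.pullback_injective e.symm.toMonoidHom e.symm.surjective)
  have h1 : Module.Finite ℚ (ι → ℚ) := Module.Finite.of_injective E hE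
  have h2 : Module.Finite ℚ (ι →₀ ℚ) :=
    Module.Finite.of_injective (Finsupp.lcoeFun (M := ℚ) (R := ℚ) (α := ι)) DFunLike.coe_injective
  have hι : Finite ι := by
    rcases Module.finite_finsupp_iff.1 h2 with h | h | h
    · infer_instance
    · exact absurd h (not_subsingleton ℚ)
    · exact h.2
  have := Fintype.ofFinite ι
  have hcard : Module.finrank ℚ (RatChar K) = Fintype.card ι := by
    rw [← Module.finrank_fintype_fun_eq_card (R := ℚ) (η := ι)]
    apply le_antisymm
    · exact LinearMap.finrank_le_finrank_of_injective (f := (RatChar.freeEquiv ι).toLinearMap ∘ₗ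
        RatChar.pullback e.symm.toMonoidHom) hE'
    · exact LinearMap.finrank_le_finrank_of_injective hE
  rw [hcard]
  exact ⟨(FreeGroup.freeGroupCongr (Fintype.equivFin ι).symm).trans e.symm⟩

/-! ### Lifting a presentation to a finite index subgroup -/

/-- A normal closure contained in a subgroup `K` of finite index `d` is the normal closure in `K` of
the conjugates of the relators by a transversal of `K`, hence of at most `d` elements per
relator. -/
lemma exists_relators {F : Type*} [Group F] (K : Subgroup F) (hK : K.index ≠ 0) (R : Finset F)
    (hR : Subgroup.normalClosure (R : Set F) ≤ K) :
    ∃ S : Finset K, S.card ≤ K.index * R.card ∧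
      (Subgroup.normalClosure (R : Set F)).subgroupOf K = Subgroup.normalClosure (S : Set K) := by
  have : K.FiniteIndex := ⟨hK⟩
  have : Fintype (F ⧸ K) := Fintype.ofFinite _
  have hmem : ∀ (x : F ⧸ K) (r : R), (Quotient.out x)⁻¹ * r * Quotient.out x ∈
      Subgroup.normalClosure (R : Set F) := fun x r => by
    simpa using Subgroup.normalClosure_normal.conj_mem (r : F)
      (Subgroup.subset_normalClosure r.2) (Quotient.out x)⁻¹
  let c : (F ⧸ K) × R → K := fun p =>
    ⟨(Quotient.out p.1)⁻¹ * p.2 * Quotient.out p.1, hR (hmem p.1 p.2)⟩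
  refine ⟨Finset.univ.image c, ?_, le_antisymm ?_ ?_⟩
  · refine Finset.card_image_le.trans (le_of_eq ?_)
    rw [Finset.card_univ, Fintype.card_prod, Fintype.card_coe, Subgroup.index,
      Nat.card_eq_fintype_card]
  · set N := Subgroup.normalClosure ((Finset.univ.image c : Finset K) : Set K) with hN
    have hle : Subgroup.normalClosure (R : Set F) ≤ N.map K.subtype := by
      refine (Subgroup.closure_le _).2 ?_
      intro y hy
      obtain ⟨r, hr, hry⟩ := Group.mem_conjugatesOfSet_iff.1 hy
      obtain ⟨w, rfl⟩ := isConj_iff.1 hry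
      -- With `w⁻¹ = t * k⁻¹` for a representative `t`, `w * r * w⁻¹ = k * (t⁻¹ * r * t) * k⁻¹`.
      obtain ⟨k, hk⟩ := QuotientGroup.mk_out_eq_mul K w⁻¹
      have hc : c ((w⁻¹ : F), ⟨r, hr⟩) ∈ N :=
        Subgroup.subset_normalClosure (by simp)
      refine ⟨k * c ((w⁻¹ : F), ⟨r, hr⟩) * k⁻¹, Subgroup.normalClosure_normal.conj_mem _ hc k, ?_⟩
      simp only [c, map_mul, map_inv, Subgroup.subtype_apply, hk]
      group
    intro x hx
    obtain ⟨z, hz, hzx⟩ := hle hx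
    rwa [← Subtype.ext hzx]
  · have : ((Subgroup.normalClosure (R : Set F)).subgroupOf K).Normal := inferInstance
    refine Subgroup.normalClosure_le_normal ?_
    intro x hx
    simp only [Finset.coe_image, Finset.coe_univ, Set.image_univ, Set.mem_range] at hx
    obtain ⟨p, rfl⟩ := hx
    exact hmem p.1 p.2

/-- The set of deficiencies of finite presentations is bounded above by the first Betti number. -/
lemma bddAbove_deficiencies (A : Type*) [Group A] :
    BddAbove {x : ℝ | ∃ (n : ℕ) (R : Finset (FreeGroup (Fin n))) (φ : FreeGroup (Fin n) →* A),
      Function.Surjective φ ∧ φ.ker = Subgroup.normalClosure (R : Set (FreeGroup (Fin n))) ∧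
      x = (n : ℝ) - (R.card : ℝ)} := by
  refine ⟨Module.finrank ℚ (RatChar A), ?_⟩
  rintro x ⟨n, R, φ, hφ, hker, rfl⟩
  have h : (n : ℝ) ≤ Module.finrank ℚ (RatChar A) + R.card := by
    exact_mod_cast presentation_le_finrank hφ hker
  linarith

/-- Every finite presentation of `A` induces one of `H` whose deficiency minus one is at least
`H.index` times as large. -/
lemma presentation_le_deficiency {A : Type*} [Group A] (H : Subgroup A) (hH : H.index ≠ 0) {n : ℕ}
    {R : Finset (FreeGroup (Fin n))} {φ : FreeGroup (Fin n) →* A} (hφ : Function.Surjective φ)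
    (hker : φ.ker = Subgroup.normalClosure (R : Set (FreeGroup (Fin n)))) :
    (H.index : ℝ) * ((n : ℝ) - R.card - 1) ≤ deficiency H - 1 := by
  set K := H.comap φ with hKdef
  have hidx : K.index = H.index := H.index_comap_of_surjective hφ
  have hK : K.index ≠ 0 := hidx ▸ hH
  have hRK : Subgroup.normalClosure (R : Set (FreeGroup (Fin n))) ≤ K := by
    rw [← hker]; exact Subgroup.ker_le_comap φ H
  obtain ⟨S, hScard, hS⟩ := exists_relators K hK R hRK
  obtain ⟨e⟩ := nonempty_mulEquiv_free K hK
  have hrank := index_mul_le_finrank K hK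
  generalize Module.finrank ℚ (RatChar K) = m at e hrank
  let ψ : FreeGroup (Fin m) →* H := (φ.subgroupComap H).comp e.toMonoidHom
  have hψ : Function.Surjective ψ :=
    (φ.subgroupComap_surjective_of_surjective H hφ).comp e.surjective
  have hψker : ψ.ker = Subgroup.normalClosure
      ((S.image e.symm : Finset (FreeGroup (Fin m))) : Set (FreeGroup (Fin m))) := by
    have h1 : (φ.subgroupComap H).ker = Subgroup.normalClosure (S : Set K) := by
      rw [← hS, ← hker]
      ext x
      exact Subtype.ext_iff
    have h2 : ψ.ker = (Subgroup.normalClosure (S : Set K)).map e.symm.toMonoidHom := by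
      rw [← h1]
      ext x
      rw [Subgroup.mem_map]
      constructor
      · intro hx
        exact ⟨e x, hx, e.symm_apply_apply x⟩
      · rintro ⟨y, hy, rfl⟩
        change φ.subgroupComap H (e (e.symm y)) = 1
        rw [e.apply_symm_apply]
        exact hy
    rw [h2, Subgroup.map_normalClosure _ _ e.symm.surjective, Finset.coe_image]
    rfl
  have hle : (m : ℝ) - ((S.image e.symm).card : ℝ) ≤ deficiency H :=
    le_csSup (bddAbove_deficiencies H) ⟨m, S.image e.symm, ψ, hψ, hψker, rfl⟩
  have hcard : ((S.image e.symm).card : ℝ) ≤ H.index * R.card := by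
    rw [← hidx]
    exact_mod_cast Finset.card_image_le.trans hScard
  have hrank' : (H.index : ℝ) * n + 1 ≤ m + H.index := by
    rw [← hidx]
    exact_mod_cast hrank
  linarith

/-- deficiency minus one is supermultiplicative with respect to
finite index subgroups. -/
theorem statement2 {G : Type*} [Group G] (hG : FinitelyPresentedGroup G)
    (H : Subgroup G) (hH : H.index ≠ 0) :
    deficiency G - 1 ≤ (deficiency H - 1) / (H.index : ℝ) := by
  have hpos : (0 : ℝ) < H.index := by exact_mod_cast Nat.pos_of_ne_zero hH
  rw [sub_le_iff_le_add]
  refine csSup_le ?_ ?_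
  · obtain ⟨n, R, φ, hφ, hker⟩ := hG
    exact ⟨_, n, R, φ, hφ, hker, rfl⟩
  · rintro x ⟨n, R, φ, hφ, hker, rfl⟩
    rw [← sub_le_iff_le_add, le_div_iff₀ hpos, mul_comm]
    exact presentation_le_deficiency H hH hφ hker

end ResDef
end

section
/- Let G be a group, H a normal subgroup of finite index in G, and g an element of H. Let K be a subgroup of the centraliser C_G(g) of g in G, let T be a left transversal for the subgroup HK in G, and let Z = { t g t⁻¹ : t ∈ T }. Then the normal closure of g in G equals the normal closure of Z in H. -/
/-!
Writing `x ∈ G` as `x = t * (h * k)` with `t ∈ T`, `h ∈ H` and `k ∈ K` (possible because `H` is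
normal, so that `H ⊔ K = HK`), the factor `k` commutes with `g`, and hence
`x * g * x⁻¹ = (t * h * t⁻¹) * (t * g * t⁻¹) * (t * h * t⁻¹)⁻¹`.
By normality `t * h * t⁻¹ ∈ H`, so every `G`-conjugate of `g` is an `H`-conjugate of an element
`t * g * t⁻¹`. The `G`-conjugates of `g` generate its normal closure in `G`, which gives one
inclusion; the other holds since a normal subgroup of `G` pulls back to a normal subgroup of `H`.
-/

open scoped Classical ENNReal

namespace ResDef

variable {G : Type*} [Group G]

/-- if `H` is a finite index normal subgroup of `G`, `g ∈ H`, `K` is a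
subgroup of the centraliser of `g`, and `T` is a left transversal for `HK` in `G`, then
the normal closure of `g` in `G` is the normal closure in `H` of the set of conjugates
of `g` by elements of `T`. -/
theorem statement5 {G : Type*} [Group G] (H : Subgroup G) (hHn : H.Normal)
    (hH : H.index ≠ 0) (g : G) (hg : g ∈ H) (K : Subgroup G)
    (hK : K ≤ Subgroup.centralizer {g}) (T : Set G)
    (hT : ∀ x : G, ∃! t : G, t ∈ T ∧ t⁻¹ * x ∈ (H ⊔ K : Subgroup G)) :
    Subgroup.normalClosure {g} =
      Subgroup.map H.subtype
        (Subgroup.normalClosure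
          ((Subtype.val ⁻¹' ((fun t : G => t * g * t⁻¹) '' T)) : Set H)) := by
  apply le_antisymm
  · refine (Subgroup.closure_le _).2 fun y hy => ?_
    obtain ⟨a, ha, hay⟩ := Group.mem_conjugatesOfSet_iff.1 hy
    obtain rfl := Set.mem_singleton_iff.1 ha
    obtain ⟨x, rfl⟩ := isConj_iff.1 hay
    obtain ⟨t, ⟨ht, htx⟩, -⟩ := hT x
    obtain ⟨h, hh, k, hk, hhk⟩ := Subgroup.mem_sup_of_normal_left.1 htx
    have hka : k * a * k⁻¹ = a := by
      rw [Subgroup.mem_centralizer_singleton_iff.1 (hK hk), mul_inv_cancel_right]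
    obtain rfl : x = t * (h * k) := by rw [hhk, mul_inv_cancel_left]
    refine ⟨(⟨t * h * t⁻¹, hHn.conj_mem h hh t⟩ : H) *
      (⟨t * a * t⁻¹, hHn.conj_mem a hg t⟩ : H) *
      (⟨t * h * t⁻¹, hHn.conj_mem h hh t⟩ : H)⁻¹, ?_, ?_⟩
    · refine Subgroup.normalClosure_normal.conj_mem _ (Subgroup.subset_normalClosure ?_) _
      exact ⟨t, ht, rfl⟩
    · calc t * h * t⁻¹ * (t * a * t⁻¹) * (t * h * t⁻¹)⁻¹ = t * h * a * h⁻¹ * t⁻¹ := by group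
        _ = t * h * (k * a * k⁻¹) * h⁻¹ * t⁻¹ := by rw [hka]
        _ = t * (h * k) * a * (t * (h * k))⁻¹ := by group
  · rw [Subgroup.map_le_iff_le_comap]
    refine Subgroup.normalClosure_le_normal ?_
    rintro z ⟨t, -, htz⟩
    change (z : G) ∈ Subgroup.normalClosure {g}
    rw [← htz]
    exact Subgroup.normalClosure_normal.conj_mem g
      (Subgroup.subset_normalClosure (Set.mem_singleton g)) t

end ResDef
end

section
/- Let G be given by a finite presentation P: a surjective homomorphism φ from the free group F_n of rank n ≥ 1 onto G whose kernel is the normal closure in F_n of {u₁^{m₁},…,u_r^{m_r}}, where m_i ≥ 1 for i = 1,…,r. Let k_i be the order of the image of φ(u_i) in G/R_G, where R_G is the finite residual of G. Then there exists a finite index normal subgroup H of G such that for every i = 1,…,r the order of the image of φ(u_i) in G/H is k_i; moreover, every finite index normal subgroup H of G with this property satisfies def(H) ≥ 1 + |G:H|·(n − 1 − Σ_{i=1}^{r} 1/k_i). -/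
/-!
Each element outside `R_G` is avoided by a normal subgroup of finite index, and a finite
intersection of these is again normal of finite index. So the finitely many
powers `φ(u i) ^ j ∉ R_G` with `j ≤ m i` are avoided by one normal subgroup of finite index; this
gives the first claim (`exists_realising`).

For the second, let `F` be the free group of rank `n`, `K = φ⁻¹(H)` and `d = |F : K| = |G : H|`.
The Reidemeister–Schreier method presents `K` on the `d * n` edges `(q, a)` of the Schreier graph on
`F ⧸ K`: for any transversal `s` with `s 1 = 1`, the relators needed are just the words read along
the `d - 1` nontrivial representatives (`loopHom_schreierHom`), and no Schreier condition on `s`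
is required. To pass from `K` to `H` one kills the conjugates in `F` of the
`u i ^ m i`. Because `u i` commutes with `u i ^ m i`, it is enough to conjugate by representatives
of the cosets of `⟨u i⟩` in `F ⧸ K` (`conj_pow_eq`), and there are `d / k i` of these. So `H` has
`d * n` generators and at most `d - 1 + ∑ d / k i` relators (`deficiency_bound`).

As `deficiency` is a real supremum, the set of deficiencies also has to be bounded above, which is
`presentation_le`: they are at most the number of elements of any generating family.
-/

open scoped Classical ENNReal

namespace ResDef

variable {G : Type*} [Group G]

/-! ### Orders modulo finite index subgroups -/

/-- The image of `x` in `G ⧸ H` has order `orderIn H x`, in agreement with the convention that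
`orderOf` is `0` at elements of infinite order. -/
lemma orderIn_eq_orderOf {G : Type*} [Group G] (H : Subgroup G) [H.Normal] (x : G) :
    orderIn H x = orderOf (x : G ⧸ H) := by
  have key : ∀ j : ℕ, x ^ j ∈ H ↔ (x : G ⧸ H) ^ j = 1 := fun j => by
    rw [← QuotientGroup.mk_pow, QuotientGroup.eq_one_iff]
  unfold orderIn
  by_cases h : {j : ℕ | 0 < j ∧ x ^ j ∈ H}.Nonempty
  · refine le_antisymm ?_ ?_
    · obtain ⟨j, hj, hjH⟩ := h
      refine Nat.sInf_le ⟨?_, (key _).2 (pow_orderOf_eq_one _)⟩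
      exact orderOf_pos_iff.2 (isOfFinOrder_iff_pow_eq_one.2 ⟨j, hj, (key j).1 hjH⟩)
    · obtain ⟨h0, h1⟩ := Nat.sInf_mem h
      exact orderOf_le_of_pow_eq_one h0 ((key _).1 h1)
  · rw [Set.not_nonempty_iff_eq_empty.1 h, Nat.sInf_empty, eq_comm, orderOf_eq_zero_iff']
    intro j hj hx
    exact h ⟨j, hj, (key j).2 hx⟩

/-- A finite set of elements outside the finite residual is avoided by a single normal subgroup
of finite index. -/
lemma exists_normal_avoiding {G : Type*} [Group G] (S : Finset G)
    (hS : ∀ s ∈ S, s ∉ finiteResidual G) :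
    ∃ H : Subgroup G, H.Normal ∧ H.index ≠ 0 ∧ ∀ s ∈ S, s ∉ H := by
  have h1 : ∀ s : S, ∃ H : Subgroup G, H.index ≠ 0 ∧ s.1 ∉ H := by
    intro s
    have := hS s.1 s.2
    simp only [finiteResidual, Subgroup.mem_iInf, not_forall] at this
    obtain ⟨H, hH, hs⟩ := this
    exact ⟨H, hH, hs⟩
  choose K hK hsK using h1
  have hfin : ∀ s : S, (K s).normalCore.FiniteIndex := fun s =>
    haveI : (K s).FiniteIndex := ⟨hK s⟩
    inferInstance
  refine ⟨⨅ s, (K s).normalCore, Subgroup.normal_iInf_normal fun s => inferInstance,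
    (Subgroup.finiteIndex_iInf hfin).index_ne_zero, fun s hs hmem => ?_⟩
  exact hsK ⟨s, hs⟩ (Subgroup.normalCore_le _ (Subgroup.mem_iInf.1 hmem ⟨s, hs⟩))

/-- The exponents `m i` bound the orders, so that only the powers `x i ^ j` with `j ≤ m i` have to be
kept outside the subgroup. -/
lemma exists_realising {G : Type*} [Group G] (r : ℕ) (x : Fin r → G) (m : Fin r → ℕ)
    (hm : ∀ i, 1 ≤ m i) (hx : ∀ i, x i ^ m i = 1) :
    ∃ H : Subgroup G, H.Normal ∧ H.index ≠ 0 ∧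
      ∀ i, orderIn H (x i) = orderIn (finiteResidual G) (x i) := by
  obtain ⟨H, hN, hI, hav⟩ := exists_normal_avoiding
    ((Finset.univ.biUnion fun i => (Finset.range (m i + 1)).image fun j => x i ^ j).filter
      fun s => s ∉ finiteResidual G) (fun s hs => (Finset.mem_filter.1 hs).2)
  refine ⟨H, hN, hI, fun i => ?_⟩
  have hle : finiteResidual G ≤ H := iInf₂_le H hI
  have hR : m i ∈ {j : ℕ | 0 < j ∧ x i ^ j ∈ finiteResidual G} :=
    ⟨hm i, by rw [hx]; exact one_mem _⟩
  have hH : m i ∈ {j : ℕ | 0 < j ∧ x i ^ j ∈ H} := ⟨hm i, hle hR.2⟩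
  refine le_antisymm ?_ ?_
  · obtain ⟨h0, h1⟩ := Nat.sInf_mem ⟨_, hR⟩
    exact Nat.sInf_le ⟨h0, hle h1⟩
  · obtain ⟨h0, h1⟩ := Nat.sInf_mem ⟨_, hH⟩
    refine Nat.sInf_le ⟨h0, ?_⟩
    by_contra hcon
    refine hav _ (Finset.mem_filter.2 ⟨?_, hcon⟩) h1
    have := Nat.sInf_le hH
    exact Finset.mem_biUnion.2 ⟨i, Finset.mem_univ _,
      Finset.mem_image.2 ⟨_, Finset.mem_range.2 (Nat.lt_succ_of_le this), rfl⟩⟩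

/-! ### Deficiency is bounded above -/

/-- The homomorphism from a free group to `ℚ` with prescribed values on the generators. -/
def expHom {α : Type*} (v : α → ℚ) : FreeGroup α →* Multiplicative ℚ :=
  FreeGroup.lift fun a => Multiplicative.ofAdd (v a)

/-- Evaluation at a word of the free group, as a linear form in the values on the generators. -/
def expLin {α : Type*} (x : FreeGroup α) : (α → ℚ) →ₗ[ℚ] ℚ where
  toFun v := (expHom v x).toAdd
  map_add' v w := by
    have : expHom (v + w) = expHom v * expHom w := by
      ext a; simp [expHom]
    rw [this]; rfl
  map_smul' c v := by
    have : expHom (c • v) =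
        (AddMonoidHom.toMultiplicative (AddMonoidHom.mulLeft c)).comp (expHom v) := by
      ext a; simp [expHom]
    rw [this]; rfl

/-- A presentation of `H` has deficiency at most the size of any generating family of `H`: a homomorphism
from the free group to `ℚ` which kills the relators and lifts of the generators of `H` is trivial,
so that `n` is at most the number of these linear conditions. -/
lemma presentation_le {H : Type*} [Group H] {n k : ℕ} (R : Finset (FreeGroup (Fin n)))
    (φ : FreeGroup (Fin n) →* H) (hs : Function.Surjective φ)
    (hk : φ.ker = Subgroup.normalClosure (R : Set (FreeGroup (Fin n))))
    (ψ : FreeGroup (Fin k) →* H) (hψ : Function.Surjective ψ) :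
    n ≤ R.card + k := by
  choose w hw using fun j : Fin k => hs (ψ (FreeGroup.of j))
  let T : (Fin n → ℚ) →ₗ[ℚ] (R → ℚ) × (Fin k → ℚ) :=
    (LinearMap.pi fun r : R => expLin r.1).prod (LinearMap.pi fun j => expLin (w j))
  have hT : Function.Injective T := by
    rw [injective_iff_map_eq_zero]
    intro v hv
    have h1 : ∀ r ∈ R, expHom v r = 1 := fun r hr => congr_fun (congr_arg Prod.fst hv) ⟨r, hr⟩
    have h2 : ∀ j, expHom v (w j) = 1 := fun j => congr_fun (congr_arg Prod.snd hv) j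
    have h3 : φ.ker ≤ (expHom v).ker := by
      rw [hk]; exact Subgroup.normalClosure_le_normal h1
    have h4 : ∀ x, expHom v x = 1 := by
      intro x
      obtain ⟨y, hy⟩ := hψ (φ x)
      have e1 : φ.comp (FreeGroup.lift w) = ψ := by ext j; simp [hw]
      have e2 : (expHom v).comp (FreeGroup.lift w) = 1 := by ext j; simp [h2]
      have e3 : x * (FreeGroup.lift w y)⁻¹ ∈ φ.ker := by
        rw [MonoidHom.mem_ker, map_mul, map_inv, ← MonoidHom.comp_apply, e1, hy, mul_inv_cancel]
      have e4 := h3 e3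
      rw [MonoidHom.mem_ker, map_mul, map_inv, ← MonoidHom.comp_apply, e2] at e4
      simpa using e4
    funext a
    have := h4 (FreeGroup.of a)
    simpa [expHom] using this
  have := LinearMap.finrank_le_finrank_of_injective hT
  simpa using this

/-- Presentations on an arbitrary finite alphabet bound the deficiency from below. -/
lemma le_deficiency {H : Type*} [Group H] {ι : Type*} [Fintype ι] (R : Finset (FreeGroup ι))
    (φ : FreeGroup ι →* H) (hs : Function.Surjective φ)
    (hk : φ.ker = Subgroup.normalClosure (R : Set (FreeGroup ι))) :
    (Fintype.card ι : ℝ) - R.card ≤ deficiency H := by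
  let e : FreeGroup (Fin (Fintype.card ι)) ≃* FreeGroup ι :=
    FreeGroup.freeGroupCongr (Fintype.equivFin ι).symm
  have hs' : Function.Surjective (φ.comp e.toMonoidHom) := hs.comp e.surjective
  have hcard : (R.map e.symm.toEquiv.toEmbedding).card = R.card := Finset.card_map _
  refine le_csSup ⟨Fintype.card ι, ?_⟩
    ⟨Fintype.card ι, R.map e.symm.toEquiv.toEmbedding, φ.comp e.toMonoidHom, hs', ?_, ?_⟩
  · rintro _ ⟨n, R', φ', hs₂, hk₂, rfl⟩
    have := presentation_le R' φ' hs₂ hk₂ _ hs'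
    rw [sub_le_iff_le_add']
    exact_mod_cast this
  · have h1 : ((R.map e.symm.toEquiv.toEmbedding : Finset _) : Set (FreeGroup (Fin _))) =
        e.symm.toMonoidHom '' (R : Set (FreeGroup ι)) := by
      rw [Finset.coe_map]; rfl
    rw [h1, ← Subgroup.map_normalClosure _ e.symm.toMonoidHom e.symm.surjective, ← hk]
    ext x
    rw [MonoidHom.mem_ker, Subgroup.mem_map]
    constructor
    · intro hx
      exact ⟨e x, hx, e.symm_apply_apply x⟩
    · rintro ⟨y, hy, rfl⟩
      simpa using hy
  · rw [hcard]

/-! ### Reidemeister–Schreier rewriting -/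

section Rewriting

variable {α : Type*} (K : Subgroup (FreeGroup α))

/-- The Reidemeister–Schreier rewriting of words, collected over all base points:
`F = FreeGroup α` maps to the
wreath product of `FreeGroup ((F ⧸ K) × α)` with `F`, a generator `a` being labelled
by `(q, a)` where it is the edge from `q` to `a • q` of the Schreier graph on `F ⧸ K`. -/
def rewriteHom : FreeGroup α →*
    ((FreeGroup α ⧸ K) → FreeGroup ((FreeGroup α ⧸ K) × α)) ⋊[mulAutArrow] FreeGroup α :=
  FreeGroup.lift fun a =>
    ⟨fun q => FreeGroup.of ((FreeGroup.of a)⁻¹ • q, a), FreeGroup.of a⟩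

/-- The word in the edges of the Schreier graph traversed by the path labelled `x` which ends
at `q` (and so starts at `x⁻¹ • q`). -/
def edgeWord (x : FreeGroup α) (q : FreeGroup α ⧸ K) : FreeGroup ((FreeGroup α ⧸ K) × α) :=
  (rewriteHom K x).left q

lemma rewriteHom_right (x : FreeGroup α) : (rewriteHom K x).right = x := by
  have : SemidirectProduct.rightHom.comp (rewriteHom K) = MonoidHom.id _ := by
    ext a; simp [rewriteHom]
  exact DFunLike.congr_fun this x

lemma edgeWord_of (a : α) (q : FreeGroup α ⧸ K) :
    edgeWord K (FreeGroup.of a) q = FreeGroup.of ((FreeGroup.of a)⁻¹ • q, a) := by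
  simp [edgeWord, rewriteHom]

lemma edgeWord_one (q : FreeGroup α ⧸ K) : edgeWord K 1 q = 1 := by
  simp [edgeWord]

lemma edgeWord_mul (x y : FreeGroup α) (q : FreeGroup α ⧸ K) :
    edgeWord K (x * y) q = edgeWord K x q * edgeWord K y (x⁻¹ • q) := by
  simp only [edgeWord, map_mul, SemidirectProduct.mul_left, rewriteHom_right]
  rfl

lemma edgeWord_inv (x : FreeGroup α) (q : FreeGroup α ⧸ K) :
    edgeWord K x⁻¹ q = (edgeWord K x (x • q))⁻¹ := by
  have := edgeWord_mul K x⁻¹ x q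
  rw [inv_mul_cancel, edgeWord_one, inv_inv] at this
  exact eq_inv_of_mul_eq_one_left this.symm

/-- A loop at the base coset acts trivially on it. -/
lemma smul_base {x : FreeGroup α} (hx : x ∈ K) :
    x • ((1 : FreeGroup α) : FreeGroup α ⧸ K) = ((1 : FreeGroup α) : FreeGroup α ⧸ K) := by
  rw [← MulAction.mem_stabilizer_iff, MulAction.stabilizer_quotient]
  exact hx

/-- Rewriting of elements of `K`, as words in the edges of the Schreier graph. -/
def loopHom : K →* FreeGroup ((FreeGroup α ⧸ K) × α) where
  toFun x := edgeWord K x.1 ((1 : FreeGroup α) : FreeGroup α ⧸ K)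
  map_one' := edgeWord_one K _
  map_mul' x y := by
    rw [Subgroup.coe_mul, edgeWord_mul, smul_base K (inv_mem x.2)]

variable (s : FreeGroup α ⧸ K → FreeGroup α)

/-- The Schreier generators: the edge `(q, a)` is closed up to a loop at the base coset by means
of the transversal `s`. -/
def schreierHom : FreeGroup ((FreeGroup α ⧸ K) × α) →* FreeGroup α :=
  FreeGroup.lift fun p => (s (FreeGroup.of p.2 • p.1))⁻¹ * FreeGroup.of p.2 * s p.1

lemma schreierHom_edgeWord (x : FreeGroup α) :
    ∀ q, schreierHom K s (edgeWord K x q) = (s q)⁻¹ * x * s (x⁻¹ • q) := by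
  induction x using FreeGroup.induction_on with
  | C1 => intro q; simp [edgeWord_one]
  | of a => intro q; simp [edgeWord_of, schreierHom]
  | inv_of a _ =>
    intro q
    simp [edgeWord_inv, edgeWord_of, schreierHom, mul_assoc]
  | mul x y hx hy =>
    intro q
    rw [edgeWord_mul, map_mul, hx, hy, mul_inv_rev, mul_smul]
    group

variable {K s}

lemma schreierHom_mem (hs : ∀ q, (s q : FreeGroup α ⧸ K) = q)
    (x : FreeGroup ((FreeGroup α ⧸ K) × α)) : schreierHom K s x ∈ K := by
  have : (schreierHom K s).range ≤ K := by
    apply FreeGroup.range_lift_le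
    rintro _ ⟨⟨q, a⟩, rfl⟩
    change (s (FreeGroup.of a • q))⁻¹ * FreeGroup.of a * s q ∈ K
    rw [mul_assoc, ← QuotientGroup.eq, hs]
    conv_lhs => rw [← hs q]
    rfl
  exact this ⟨x, rfl⟩

/-- `schreierHom` inverts the rewriting of elements of `K`. -/
lemma schreierHom_loopHom (h1 : s ((1 : FreeGroup α) : FreeGroup α ⧸ K) = 1) (x : K) :
    schreierHom K s (loopHom K x) = x := by
  change schreierHom K s (edgeWord K x.1 _) = _
  rw [schreierHom_edgeWord, smul_base K (inv_mem x.2), h1]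
  simp

/-- Modulo the words `edgeWord K (s q) q` read along the transversal, rewriting is also a left
inverse of `schreierHom`. Hence, if `s` represents the trivial coset by `1`,
these words normally generate the kernel of `schreierHom`. -/
lemma loopHom_schreierHom (hs : ∀ q, (s q : FreeGroup α ⧸ K) = q)
    (M : Subgroup (FreeGroup ((FreeGroup α ⧸ K) × α))) [M.Normal]
    (hM : ∀ q, edgeWord K (s q) q ∈ M) (x : FreeGroup ((FreeGroup α ⧸ K) × α)) :
    ((loopHom K ⟨schreierHom K s x, schreierHom_mem hs x⟩ :
      FreeGroup ((FreeGroup α ⧸ K) × α)) : FreeGroup ((FreeGroup α ⧸ K) × α) ⧸ M) = x := by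
  have : (QuotientGroup.mk' M).comp ((loopHom K).comp
      ((schreierHom K s).codRestrict K (schreierHom_mem hs))) = QuotientGroup.mk' M := by
    ext ⟨q, a⟩
    have hbase : ∀ q, s q • ((1 : FreeGroup α) : FreeGroup α ⧸ K) = q := fun q => by
      conv_rhs => rw [← hs q]
      change ((s q * 1 : FreeGroup α) : FreeGroup α ⧸ K) = _
      rw [mul_one]
    have hval : schreierHom K s (FreeGroup.of (q, a)) =
        (s (FreeGroup.of a • q))⁻¹ * (FreeGroup.of a * s q) := by
      simp [schreierHom, mul_assoc]
    change ((edgeWord K (schreierHom K s (FreeGroup.of (q, a))) _ :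
      FreeGroup ((FreeGroup α ⧸ K) × α)) : FreeGroup ((FreeGroup α ⧸ K) × α) ⧸ M) = _
    rw [hval, edgeWord_mul, edgeWord_mul, edgeWord_inv, inv_inv, hbase, inv_smul_smul,
      edgeWord_of, inv_smul_smul]
    have e1 := (QuotientGroup.eq_one_iff _).2 (hM q)
    have e2 := (QuotientGroup.eq_one_iff _).2 (hM (FreeGroup.of a • q))
    rw [QuotientGroup.mk_mul, QuotientGroup.mk_mul, QuotientGroup.mk_inv, e1, e2]
    simp
  exact DFunLike.congr_fun this x

end Rewriting

/-! ### The presentation of a finite index normal subgroup -/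

/-- Since a power of `v` is unchanged under conjugation by `v`, its conjugates in `F` are, up to
conjugation by `K`, the conjugates by representatives of the cosets of `⟨v⟩` in `F ⧸ K`. -/
lemma conj_pow_eq {F : Type*} [Group F] (K : Subgroup F) [K.Normal] (v : F) (m : ℕ)
    (t : (F ⧸ K) ⧸ Subgroup.zpowers (v : F ⧸ K) → F)
    (ht : ∀ c, ((t c : F ⧸ K) : (F ⧸ K) ⧸ Subgroup.zpowers (v : F ⧸ K)) = c) (f : F) :
    ∃ c, ∃ k ∈ K, f * v ^ m * f⁻¹ = k * (t c * v ^ m * (t c)⁻¹) * k⁻¹ := by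
  obtain ⟨j, hj⟩ := Subgroup.mem_zpowers_iff.1 (QuotientGroup.eq.1 (ht ((f : F ⧸ K))))
  set c := (((f : F ⧸ K)) : (F ⧸ K) ⧸ Subgroup.zpowers (v : F ⧸ K)) with hc
  refine ⟨c, f * (t c * v ^ j)⁻¹, ?_, ?_⟩
  · rw [← QuotientGroup.eq_one_iff, QuotientGroup.mk_mul, QuotientGroup.mk_inv,
      QuotientGroup.mk_mul, QuotientGroup.mk_zpow, hj]
    group
  · have : v ^ j * v ^ m = v ^ m * v ^ j := (Commute.refl v).zpow_left j |>.pow_right m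
    have e : v ^ m = (v ^ j)⁻¹ * v ^ m * v ^ j := by
      rw [mul_assoc, ← this, inv_mul_cancel_left]
    conv_lhs => rw [e]
    group

/-- The bound holds for every finite index normal subgroup, with the orders of the `φ (u i)` taken
modulo `H` itself. -/
lemma deficiency_bound {G : Type*} [Group G] (n r : ℕ)
    (u : Fin r → FreeGroup (Fin n)) (m : Fin r → ℕ)
    (φ : FreeGroup (Fin n) →* G) (hsurj : Function.Surjective φ)
    (hker : φ.ker = Subgroup.normalClosure (Set.range fun i => u i ^ m i))
    (H : Subgroup G) [hN : H.Normal] (hI : H.index ≠ 0) :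
    1 + (H.index : ℝ) * ((n : ℝ) - 1 - ∑ i, ((orderIn H (φ (u i)) : ℝ))⁻¹) ≤ deficiency H := by
  set K : Subgroup (FreeGroup (Fin n)) := H.comap φ with hKdef
  have : K.Normal := hN.comap φ
  have hidx : K.index = H.index := H.index_comap_of_surjective hsurj
  have : K.FiniteIndex := ⟨by rw [hidx]; exact hI⟩
  let Q := FreeGroup (Fin n) ⧸ K
  let _ : Fintype Q := Fintype.ofFinite _
  have hQ : Fintype.card Q = H.index := by
    rw [← hidx, Subgroup.index, Nat.card_eq_fintype_card]
  have hkerK : φ.ker ≤ K := fun x hx => by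
    rw [hKdef, Subgroup.mem_comap, MonoidHom.mem_ker.1 hx]; exact one_mem _
  -- A transversal of `K` which represents the trivial coset by `1`.
  obtain ⟨s, hs, h1⟩ : ∃ s : Q → FreeGroup (Fin n), (∀ q, (s q : Q) = q) ∧ s (1 : Q) = 1 := by
    refine ⟨Function.update Quotient.out (1 : Q) 1, fun q => ?_, Function.update_self _ _ _⟩
    by_cases h : q = 1
    · rw [h, Function.update_self]; rfl
    · rw [Function.update_of_ne h]; exact QuotientGroup.out_eq' q
  let C : Fin r → Type := fun i => Q ⧸ Subgroup.zpowers (u i : Q)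
  let _ : ∀ i, Fintype (C i) := fun i => Fintype.ofFinite _
  have hC : ∀ i, (Fintype.card (C i) : ℝ) =
      (H.index : ℝ) * ((orderIn H (φ (u i)) : ℝ))⁻¹ := by
    intro i
    have e1 : orderIn H (φ (u i)) = orderOf (u i : Q) := by
      rw [← orderIn_eq_orderOf K (u i)]
      simp only [orderIn, hKdef, Subgroup.mem_comap, map_pow]
    have e2 := Subgroup.card_eq_card_quotient_mul_card_subgroup (Subgroup.zpowers (u i : Q))
    rw [Nat.card_zpowers, Nat.card_eq_fintype_card, hQ, Nat.card_eq_fintype_card] at e2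
    have e3 : orderOf (u i : Q) ≠ 0 := (orderOf_pos _).ne'
    rw [e1, e2]
    push_cast
    rw [mul_assoc, mul_inv_cancel₀ (by exact_mod_cast e3), mul_one]
  have hC' : ∀ i, ∃ t : C i → FreeGroup (Fin n), ∀ c, ((t c : Q) : C i) = c := by
    intro i
    refine ⟨fun c => (c.out).out, fun c => ?_⟩
    rw [QuotientGroup.out_eq', QuotientGroup.out_eq']
  choose t ht using hC'
  have hrel : ∀ i f, f * u i ^ m i * f⁻¹ ∈ φ.ker := fun i f =>
    (MonoidHom.normal_ker φ).conj_mem _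
      (by rw [hker]; exact Subgroup.subset_normalClosure ⟨i, rfl⟩) f
  let R₁ : Finset (FreeGroup (Q × Fin n)) :=
    (Finset.univ.erase (1 : Q)).image fun q => edgeWord K (s q) q
  let R₂ : Finset (FreeGroup (Q × Fin n)) :=
    (Finset.univ : Finset (Σ i, C i)).image fun p =>
      loopHom K ⟨t p.1 p.2 * u p.1 ^ m p.1 * (t p.1 p.2)⁻¹, hkerK (hrel _ _)⟩
  have hcard : ((R₁ ∪ R₂).card : ℝ) ≤
      (H.index : ℝ) - 1 + ∑ i, (H.index : ℝ) * ((orderIn H (φ (u i)) : ℝ))⁻¹ := by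
    have c1 : R₁.card + 1 ≤ H.index := by
      have := Finset.card_erase_add_one (Finset.mem_univ (1 : Q))
      rw [Finset.card_univ, hQ] at this
      rw [← this]
      exact Nat.add_le_add_right Finset.card_image_le 1
    have c2 : R₂.card ≤ ∑ i, Fintype.card (C i) := by
      refine Finset.card_image_le.trans ?_
      rw [Finset.card_univ, Fintype.card_sigma]
    have c3 : ((R₁ ∪ R₂).card : ℝ) ≤ R₁.card + R₂.card := by
      exact_mod_cast Finset.card_union_le _ _
    have c1' : (R₁.card : ℝ) + 1 ≤ H.index := by exact_mod_cast c1
    have c2' : (R₂.card : ℝ) ≤ ∑ i, (Fintype.card (C i) : ℝ) := by exact_mod_cast c2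
    simp only [hC] at c2'
    linarith
  let ψ : FreeGroup (Q × Fin n) →* H :=
    (φ.comp (schreierHom K s)).codRestrict H fun x => schreierHom_mem hs x
  have hψ : ∀ x, ψ x = 1 ↔ schreierHom K s x ∈ φ.ker := fun x => by
    rw [MonoidHom.mem_ker, Subtype.ext_iff]; rfl
  have hψs : Function.Surjective ψ := by
    rintro ⟨h, hh⟩
    obtain ⟨f, rfl⟩ := hsurj h
    exact ⟨loopHom K ⟨f, hh⟩, Subtype.ext (congr_arg φ (schreierHom_loopHom h1 ⟨f, hh⟩))⟩
  have hψk : ψ.ker =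
      Subgroup.normalClosure ((R₁ ∪ R₂ : Finset _) : Set (FreeGroup (Q × Fin n))) := by
    apply le_antisymm
    · set M := Subgroup.normalClosure ((R₁ ∪ R₂ : Finset _) : Set (FreeGroup (Q × Fin n)))
        with hM
      have hM1 : ∀ q, edgeWord K (s q) q ∈ M := by
        intro q
        by_cases h : q = 1
        · rw [h, h1, edgeWord_one]; exact one_mem _
        · exact Subgroup.subset_normalClosure (Finset.mem_coe.2 (Finset.mem_union_left _
            (Finset.mem_image_of_mem _ (Finset.mem_erase.2 ⟨h, Finset.mem_univ _⟩))))
      have hM2 : ∀ i c, loopHom K ⟨t i c * u i ^ m i * (t i c)⁻¹, hkerK (hrel _ _)⟩ ∈ M :=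
        fun i c => Subgroup.subset_normalClosure (Finset.mem_coe.2 (Finset.mem_union_right _
          (Finset.mem_image.2 ⟨⟨i, c⟩, Finset.mem_univ _, rfl⟩)))
      -- The normal closure of the relators in the whole free group is generated, as a subgroup,
      -- by their conjugates, each of which is `K`-conjugate to one accounted for in `R₂`.
      have hM3 : φ.ker ≤ (M.comap (loopHom K)).map K.subtype := by
        rw [hker, Subgroup.normalClosure, Subgroup.closure_le]
        intro y hy
        obtain ⟨_, ⟨i, rfl⟩, hy⟩ := Group.mem_conjugatesOfSet_iff.1 hy
        obtain ⟨f, rfl⟩ := isConj_iff.1 hy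
        obtain ⟨c, k, hk, e⟩ := conj_pow_eq K (u i) (m i) (t i) (ht i) f
        refine ⟨⟨k, hk⟩ * ⟨_, hkerK (hrel i (t i c))⟩ * ⟨k, hk⟩⁻¹, ?_, e.symm⟩
        rw [SetLike.mem_coe, Subgroup.mem_comap, map_mul, map_mul, map_inv]
        exact Subgroup.Normal.conj_mem inferInstance _ (hM2 i c) _
      intro x hx
      obtain ⟨y, hy, e⟩ := hM3 ((hψ x).1 hx)
      have e' : y = ⟨schreierHom K s x, schreierHom_mem hs x⟩ := Subtype.ext e
      subst e'
      rw [← QuotientGroup.eq_one_iff, ← loopHom_schreierHom hs M hM1 x]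
      exact (QuotientGroup.eq_one_iff _).2 hy
    · refine Subgroup.normalClosure_le_normal fun x hx => ?_
      rw [SetLike.mem_coe, MonoidHom.mem_ker, hψ]
      rcases Finset.mem_union.1 (Finset.mem_coe.1 hx) with hx | hx
      · obtain ⟨q, -, rfl⟩ := Finset.mem_image.1 hx
        have : (s q)⁻¹ • q = (1 : Q) := by
          rw [inv_smul_eq_iff]
          conv_lhs => rw [← hs q]
          change _ = ((s q * 1 : FreeGroup (Fin n)) : Q)
          rw [mul_one]
        rw [schreierHom_edgeWord, this, h1]
        simp
      · obtain ⟨⟨i, c⟩, -, rfl⟩ := Finset.mem_image.1 hx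
        rw [schreierHom_loopHom h1]
        exact hrel i _
  have hfin := le_deficiency (R₁ ∪ R₂) ψ hψs hψk
  rw [Fintype.card_prod, hQ, Fintype.card_fin] at hfin
  push_cast at hfin
  rw [← Finset.mul_sum] at hcard
  linarith

/-- for a finite presentation with proper power relators, there are finite
index normal subgroups `H` realising the orders `k_i` of the `φ(u_i)` in `G/R_G`, and
every such `H` has deficiency at least `1 + |G:H|(n − 1 − Σ 1/k_i)`. -/
theorem statement6 {G : Type*} [Group G] (n r : ℕ) (hn : 1 ≤ n)
    (u : Fin r → FreeGroup (Fin n)) (m : Fin r → ℕ) (hm : ∀ i, 1 ≤ m i)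
    (φ : FreeGroup (Fin n) →* G) (hsurj : Function.Surjective φ)
    (hker : φ.ker = Subgroup.normalClosure (Set.range fun i => u i ^ m i)) :
    (∃ H : Subgroup G, H.Normal ∧ H.index ≠ 0 ∧
      ∀ i, orderIn H (φ (u i)) = orderIn (finiteResidual G) (φ (u i))) ∧
    (∀ H : Subgroup G, H.Normal → H.index ≠ 0 →
      (∀ i, orderIn H (φ (u i)) = orderIn (finiteResidual G) (φ (u i))) →
      1 + (H.index : ℝ) *
          ((n : ℝ) - 1 - ∑ i, ((orderIn (finiteResidual G) (φ (u i)) : ℝ))⁻¹)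
        ≤ deficiency H) := by
  refine ⟨exists_realising r (fun i => φ (u i)) m hm fun i => ?_, fun H hN hI hH => ?_⟩
  · rw [← map_pow, ← MonoidHom.mem_ker, hker]
    exact Subgroup.subset_normalClosure ⟨i, rfl⟩
  · simp only [← hH]
    exact deficiency_bound n r u m φ hsurj hker H hI

end ResDef
end

section
/- Let G be given by a finite presentation P = ⟨x₁,…,x_n | r₁^{a₁},…,r_m^{a_m}⟩, where each word r_i ∈ F_n is not a proper power in F_n. Suppose G has a residually finite quotient with no collapse, that is, a homomorphism ψ from G to a residually finite group N such that the order of ψ(φ(r_i)) in N is a_i for all i = 1,…,m, where φ: F_n → G is the canonical surjection. Then rdef(P) = n − Σ_{i=1}^{m} 1/a_i. -/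
/-!
A homomorphism `ψ : G →* N` pulls finite index subgroups back to finite index subgroups, so it
maps the finite residual of `G` into that of `N` (`finiteResidual_le_comap`). When `N` is residually
finite, a power of `g` lying in the finite residual of `G` is therefore killed by `ψ`, so its exponent
is a multiple of the order of `ψ g`. For `g = φ (r i)` that order is `a i`, and the relator
`r i ^ a i` shows that the exponent `a i` itself is attained (`orderIn_eq_orderOf`). The two sums
thus agree term by term.
-/

open scoped Classical ENNReal

namespace ResDef

variable {G : Type*} [Group G]

theorem finiteResidual_le_comap {G N : Type*} [Group G] [Group N] (ψ : G →* N) :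
    finiteResidual G ≤ (finiteResidual N).comap ψ := by
  intro g hg
  simp only [finiteResidual, Subgroup.mem_comap, Subgroup.mem_iInf] at hg ⊢
  intro H hH
  have : H.FiniteIndex := ⟨hH⟩
  refine hg (H.comap ψ) ?_
  rw [Subgroup.index_comap]
  exact Subgroup.isFiniteRelIndex_of_finiteIndex.relIndex_ne_zero

/-- If `g ^ k = 1` where `k` is the order of `ψ g` in a residually finite group, then `g` still has
order `k` modulo the finite residual. Positivity of `k` matters: `orderIn` is an infimum over
positive exponents. -/
theorem orderIn_eq_orderOf_s9 {G N : Type*} [Group G] [Group N] (hN : finiteResidual N = ⊥)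
    (ψ : G →* N) {g : G} {k : ℕ} (hk : 0 < k) (hg : g ^ k = 1) (hord : orderOf (ψ g) = k) :
    orderIn (finiteResidual G) g = k := by
  refine IsLeast.csInf_eq ⟨⟨hk, hg ▸ one_mem _⟩, ?_⟩
  rintro j ⟨hj, hmem⟩
  have h := finiteResidual_le_comap ψ hmem
  rw [Subgroup.mem_comap, hN, Subgroup.mem_bot, map_pow] at h
  exact hord ▸ Nat.le_of_dvd hj (orderOf_dvd_of_pow_eq_one h)

/-- if `G` has a residually finite quotient with no collapse for the
presentation `P`, then `rdef(P) = n − Σ 1/a_i`. -/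
theorem statement9 {G N : Type*} [Group G] [Group N] (n s : ℕ)
    (r : Fin s → FreeGroup (Fin n)) (a : Fin s → ℕ) (ha : ∀ i, 1 ≤ a i)
    (hnpp : ∀ i, NotProperPower (r i)) (φ : FreeGroup (Fin n) →* G)
    (hsurj : Function.Surjective φ)
    (hker : φ.ker = Subgroup.normalClosure (Set.range fun i => r i ^ a i))
    (hNrf : finiteResidual N = ⊥) (ψ : G →* N)
    (hord : ∀ i, orderOf (ψ (φ (r i))) = a i) :
    (n : ℝ) - ∑ i, ((orderIn (finiteResidual G) (φ (r i)) : ℝ))⁻¹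
      = (n : ℝ) - ∑ i, ((a i : ℝ))⁻¹ := by
  have key : ∀ i, orderIn (finiteResidual G) (φ (r i)) = a i := fun i => by
    refine orderIn_eq_orderOf_s9 hNrf ψ (ha i) ?_ (hord i)
    rw [← map_pow, ← MonoidHom.mem_ker, hker]
    exact Subgroup.subset_normalClosure ⟨i, rfl⟩
  simp only [key]

end ResDef
end
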